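/- Assume (A1)–(A4) as in the nonlinear stability theorem, and let (ρ, η, μ_ρ, μ_η) and (ρ̂, η̂, μ̂_ρ, μ̂_η) be two smooth functions of (t,x) ∈ [0,T] × ℝ^d, ℤ^d-periodic in x, each solving pointwise the coupled Cahn–Hilliard/Allen–Cahn system ∂_t ρ = div(L₁₁ ∇μ_ρ + L₁₂ μ_η), μ_ρ = −γ_ρ Δρ + ∂_ρ f(ρ,η), ∂_t η = −(L₂₁·∇μ_ρ + L₂₂ μ_η), μ_η = −γ_η Δη + ∂_η f(ρ,η), with mobility evaluated at the respective solution. If ρ(0,·) = ρ̂(0,·) and η(0,·) = η̂(0,·), then (ρ, η) = (ρ̂, η̂) and (μ_ρ, μ_η) = (μ̂_ρ, μ̂_η) on all of [0,T] × ℝ^d. -/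

import Mathlib

noncomputable section
open MeasureTheory

/-- The periodicity cell `Ω = [0,1]^d`. -/
def cell (d : ℕ) : Set (Fin d → ℝ) := Set.Icc 0 1

/-- `ℤ^d`-periodicity of a function on `ℝ^d`. -/
def ZPeriodic {d : ℕ} (f : (Fin d → ℝ) → ℝ) : Prop :=
  ∀ (x : Fin d → ℝ) (k : Fin d → ℤ), f (x + fun i => (k i : ℝ)) = f x

/-- The gradient of a scalar field on `ℝ^d`. -/
def grad {d : ℕ} (f : (Fin d → ℝ) → ℝ) (x : Fin d → ℝ) : Fin d → ℝ :=
  fun i => fderiv ℝ f x (Pi.single i 1)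

/-- The divergence of a vector field on `ℝ^d`. -/
def divg {d : ℕ} (F : (Fin d → ℝ) → Fin d → ℝ) (x : Fin d → ℝ) : ℝ :=
  ∑ i, fderiv ℝ (fun y => F y i) x (Pi.single i 1)

/-- The Laplacian of a scalar field on `ℝ^d`. -/
def lap {d : ℕ} (f : (Fin d → ℝ) → ℝ) (x : Fin d → ℝ) : ℝ :=
  ∑ i, fderiv ℝ (fun y => fderiv ℝ f y (Pi.single i 1)) x (Pi.single i 1)

/-- Squared `L²(Ω)` norm. -/
def l2sq {d : ℕ} (f : (Fin d → ℝ) → ℝ) : ℝ := ∫ x in cell d, (f x) ^ 2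

/-- Squared `L²(Ω)` norm of a vector field. -/
def l2sqVec {d : ℕ} (F : (Fin d → ℝ) → Fin d → ℝ) : ℝ :=
  ∫ x in cell d, ∑ i, (F x i) ^ 2

/-- Squared `H¹(Ω)` norm, `‖f‖₁² = ‖f‖₀² + ‖∇f‖₀²`. -/
def h1sq {d : ℕ} (f : (Fin d → ℝ) → ℝ) : ℝ := l2sq f + l2sqVec (grad f)

/-- Negative-order norm `‖r‖₋₁ = sup { ∫_Ω r v dx / ‖v‖₁ }`, the supremum
being over nonzero smooth `ℤ^d`-periodic test functions. -/
def hneg1 {d : ℕ} (r : (Fin d → ℝ) → ℝ) : ℝ :=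
  sSup { c | ∃ v : (Fin d → ℝ) → ℝ, ContDiff ℝ (⊤ : ℕ∞) v ∧ ZPeriodic v ∧ v ≠ 0 ∧
    c = (∫ x in cell d, r x * v x) / Real.sqrt (h1sq v) }

/-- The argument tuple `(ρ, ∇ρ, η, ∇η) ∈ ℝ^{2d+2}` of the mobility. -/
abbrev Args (d : ℕ) := ℝ × (Fin d → ℝ) × ℝ × (Fin d → ℝ)

/-- Mobility arguments `(ρ(x), ∇ρ(x), η(x), ∇η(x))`. -/
def mobArgs {d : ℕ} (ρ η : (Fin d → ℝ) → ℝ) (x : Fin d → ℝ) : Args d :=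
  (ρ x, grad ρ x, η x, grad η x)

/-- The vector `(g, s) ∈ ℝ^{d+1}`. -/
def dvec {d : ℕ} (g : Fin d → ℝ) (s : ℝ) : (Fin d ⊕ Unit) → ℝ :=
  Sum.elim g fun _ => s

/-- Quadratic form `ξᵀ M ξ` on `ℝ^{d+1}`. -/
def qform {d : ℕ} (M : Matrix (Fin d ⊕ Unit) (Fin d ⊕ Unit) ℝ)
    (ξ : (Fin d ⊕ Unit) → ℝ) : ℝ :=
  ∑ i, ∑ j, ξ i * M i j * ξ j

/-- The dissipation functional
`D_{ρ,η}(u,w) = ∫_Ω (∇u, w)ᵀ L(ρ,∇ρ,η,∇η) (∇u, w) dx`. -/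
def diss (d : ℕ) (L : Args d → Matrix (Fin d ⊕ Unit) (Fin d ⊕ Unit) ℝ)
    (ρ η u w : (Fin d → ℝ) → ℝ) : ℝ :=
  ∫ x in cell d, qform (L (mobArgs ρ η x)) (dvec (grad u x) (w x))

/-- Partial derivative `∂_ρ` of a two-variable function. -/
def pdRho (f : ℝ → ℝ → ℝ) : ℝ → ℝ → ℝ := fun ρ η => deriv (fun r => f r η) ρ

/-- Partial derivative `∂_η` of a two-variable function. -/
def pdEta (f : ℝ → ℝ → ℝ) : ℝ → ℝ → ℝ := fun ρ η => deriv (fun e => f ρ e) η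

/-- Iterated partial derivative `∂_ρ^k ∂_η^l f`. -/
def pdiff (k l : ℕ) (f : ℝ → ℝ → ℝ) : ℝ → ℝ → ℝ := pdRho^[k] (pdEta^[l] f)

/-- The relative energy functional `E_α(ρ,η|ρ̂,η̂)`. -/
def relE (d : ℕ) (γρ γη α : ℝ) (f : ℝ → ℝ → ℝ)
    (ρ η ρh ηh : (Fin d → ℝ) → ℝ) : ℝ :=
  ∫ x in cell d,
    γρ / 2 * ∑ i, (grad (fun y => ρ y - ρh y) x i) ^ 2
    + γη / 2 * ∑ i, (grad (fun y => η y - ηh y) x i) ^ 2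
    + α / 2 * (ρ x - ρh x) ^ 2 + α / 2 * (η x - ηh x) ^ 2
    + f (ρ x) (η x) - f (ρh x) (ηh x)
    - pdRho f (ρh x) (ηh x) * (ρ x - ρh x)
    - pdEta f (ρh x) (ηh x) * (η x - ηh x)

/-- Smoothness in space-time together with `ℤ^d`-periodicity in space. -/
def SmoothPer (d : ℕ) (u : ℝ → (Fin d → ℝ) → ℝ) : Prop :=
  ContDiff ℝ (⊤ : ℕ∞) (fun p : ℝ × (Fin d → ℝ) => u p.1 p.2) ∧ ∀ t, ZPeriodic (u t)

/-- `(ρ,η,μ_ρ,μ_η)` solves the coupled Cahn–Hilliard/Allen–Cahn system with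
mobility `L` (evaluated at `(ρ,∇ρ,η,∇η)`), pointwise on `[0,T] × ℝ^d`. -/
def Solves (d : ℕ) (T γρ γη : ℝ) (f : ℝ → ℝ → ℝ)
    (L : Args d → Matrix (Fin d ⊕ Unit) (Fin d ⊕ Unit) ℝ)
    (ρ η μρ μη : ℝ → (Fin d → ℝ) → ℝ) : Prop :=
  ∀ t ∈ Set.Icc (0:ℝ) T, ∀ x,
    (deriv (fun s => ρ s x) t =
      divg (fun y i =>
        (∑ j, L (mobArgs (ρ t) (η t) y) (Sum.inl i) (Sum.inl j)
            * grad (μρ t) y j)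
        + L (mobArgs (ρ t) (η t) y) (Sum.inl i) (Sum.inr ()) * μη t y) x) ∧
    (μρ t x = -γρ * lap (ρ t) x + pdRho f (ρ t x) (η t x)) ∧
    (deriv (fun s => η s x) t =
      -((∑ i, L (mobArgs (ρ t) (η t) x) (Sum.inr ()) (Sum.inl i)
            * grad (μρ t) x i)
        + L (mobArgs (ρ t) (η t) x) (Sum.inr ()) (Sum.inr ()) * μη t x)) ∧
    (μη t x = -γη * lap (η t) x + pdEta f (ρ t x) (η t x))

/-- Residual `r₁ = ∂_t ρ̂ − div(L₁₁ ∇μ̂_ρ + L₁₂ μ̂_η)` with mobility evaluated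
at `(ρ,∇ρ,η,∇η)`. -/
def res1 {d : ℕ} (L : Args d → Matrix (Fin d ⊕ Unit) (Fin d ⊕ Unit) ℝ)
    (ρ η ρh μρh μηh : ℝ → (Fin d → ℝ) → ℝ) (t : ℝ) (x : Fin d → ℝ) : ℝ :=
  deriv (fun s => ρh s x) t -
    divg (fun y i =>
      (∑ j, L (mobArgs (ρ t) (η t) y) (Sum.inl i) (Sum.inl j)
          * grad (μρh t) y j)
      + L (mobArgs (ρ t) (η t) y) (Sum.inl i) (Sum.inr ()) * μηh t y) x

/-- Residual `r₂ = μ̂_ρ + γ_ρ Δρ̂ − ∂_ρ f(ρ̂,η̂)`. -/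
def res2 {d : ℕ} (γρ : ℝ) (f : ℝ → ℝ → ℝ)
    (ρh ηh μρh : ℝ → (Fin d → ℝ) → ℝ) (t : ℝ) (x : Fin d → ℝ) : ℝ :=
  μρh t x + γρ * lap (ρh t) x - pdRho f (ρh t x) (ηh t x)

/-- Residual `r₃ = ∂_t η̂ + L₂₁·∇μ̂_ρ + L₂₂ μ̂_η` with mobility evaluated at
`(ρ,∇ρ,η,∇η)`. -/
def res3 {d : ℕ} (L : Args d → Matrix (Fin d ⊕ Unit) (Fin d ⊕ Unit) ℝ)
    (ρ η ηh μρh μηh : ℝ → (Fin d → ℝ) → ℝ) (t : ℝ) (x : Fin d → ℝ) : ℝ :=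
  deriv (fun s => ηh s x) t
    + (∑ i, L (mobArgs (ρ t) (η t) x) (Sum.inr ()) (Sum.inl i)
        * grad (μρh t) x i)
    + L (mobArgs (ρ t) (η t) x) (Sum.inr ()) (Sum.inr ()) * μηh t x

/-- Residual `r₄ = μ̂_η + γ_η Δη̂ − ∂_η f(ρ̂,η̂)`. -/
def res4 {d : ℕ} (γη : ℝ) (f : ℝ → ℝ → ℝ)
    (ρh ηh μηh : ℝ → (Fin d → ℝ) → ℝ) (t : ℝ) (x : Fin d → ℝ) : ℝ :=
  μηh t x + γη * lap (ηh t) x - pdEta f (ρh t x) (ηh t x)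

section Aux

/-- Directional derivative. -/
def Dv {E : Type*} [NormedAddCommGroup E] [NormedSpace ℝ E] (w : E) (U : E → ℝ) : E → ℝ :=
  fun p => fderiv ℝ U p w

theorem Dv_contDiff {E : Type*} [NormedAddCommGroup E] [NormedSpace ℝ E] {U : E → ℝ} (w : E)
    (hU : ContDiff ℝ (⊤ : ℕ∞) U) : ContDiff ℝ (⊤ : ℕ∞) (Dv w U) := by
  have h1 : ContDiff ℝ (⊤ : ℕ∞) (fderiv ℝ U) := hU.fderiv_right (m := (⊤ : ℕ∞)) (by simp)
  exact h1.clm_apply contDiff_const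

theorem smooth_differentiable {E F : Type*} [NormedAddCommGroup E] [NormedSpace ℝ E]
    [NormedAddCommGroup F] [NormedSpace ℝ F] {U : E → F}
    (hU : ContDiff ℝ (⊤ : ℕ∞) U) : Differentiable ℝ U :=
  hU.differentiable (by simp)

theorem Dv_comm {E : Type*} [NormedAddCommGroup E] [NormedSpace ℝ E] {U : E → ℝ} (w w' : E)
    (hU : ContDiff ℝ (⊤ : ℕ∞) U) (p : E) : Dv w (Dv w' U) p = Dv w' (Dv w U) p := by
  have h1 : ContDiff ℝ (⊤ : ℕ∞) (fderiv ℝ U) := hU.fderiv_right (m := (⊤ : ℕ∞)) (by simp)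
  have h2 : DifferentiableAt ℝ (fderiv ℝ U) p := smooth_differentiable h1 p
  have hs : IsSymmSndFDerivAt ℝ U p :=
    hU.contDiffAt.isSymmSndFDerivAt (by simp; exact WithTop.coe_le_coe.2 (le_top : (2:ℕ∞) ≤ ⊤))
  have key : ∀ a b : E, Dv a (Dv b U) p = fderiv ℝ (fderiv ℝ U) p a b := by
    intro a b
    unfold Dv
    rw [fderiv_clm_apply h2 (differentiableAt_const b)]
    simp
  rw [key, key]
  exact hs w w'

theorem slice_x {d : ℕ} {U : ℝ × (Fin d → ℝ) → ℝ} (hU : Differentiable ℝ U) (t : ℝ)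
    (x v : Fin d → ℝ) : fderiv ℝ (fun y => U (t, y)) x v = Dv (0, v) U (t, x) := by
  have h : HasFDerivAt (fun y => U (t, y))
      ((fderiv ℝ U (t, x)).comp (ContinuousLinearMap.inr ℝ ℝ (Fin d → ℝ))) x :=
    (hU (t, x)).hasFDerivAt.comp x (hasFDerivAt_prodMk_right t x)
  rw [h.fderiv]
  simp [Dv]

theorem slice_t' {d : ℕ} {U : ℝ × (Fin d → ℝ) → ℝ} (hU : Differentiable ℝ U) (t : ℝ)
    (x : Fin d → ℝ) : HasDerivAt (fun s => U (s, x)) (Dv (1, 0) U (t, x)) t := by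
  have h : HasFDerivAt (fun s => U (s, x))
      ((fderiv ℝ U (t, x)).comp (ContinuousLinearMap.inl ℝ ℝ (Fin d → ℝ))) t :=
    (hU (t, x)).hasFDerivAt.comp t (hasFDerivAt_prodMk_left t x)
  have := h.hasDerivAt
  simpa [Dv] using this

theorem slice_t {d : ℕ} {U : ℝ × (Fin d → ℝ) → ℝ} (hU : Differentiable ℝ U) (t : ℝ)
    (x : Fin d → ℝ) : deriv (fun s => U (s, x)) t = Dv (1, 0) U (t, x) :=
  (slice_t' hU t x).deriv

theorem Dv_add {E : Type*} [NormedAddCommGroup E] [NormedSpace ℝ E] {U V : E → ℝ} (w p : E)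
    (hU : Differentiable ℝ U) (hV : Differentiable ℝ V) :
    Dv w (fun z => U z + V z) p = Dv w U p + Dv w V p := by
  unfold Dv
  rw [fderiv_fun_add (hU p) (hV p)]; rfl

theorem Dv_sub {E : Type*} [NormedAddCommGroup E] [NormedSpace ℝ E] {U V : E → ℝ} (w p : E)
    (hU : Differentiable ℝ U) (hV : Differentiable ℝ V) :
    Dv w (fun z => U z - V z) p = Dv w U p - Dv w V p := by
  unfold Dv
  rw [fderiv_fun_sub (hU p) (hV p)]; rfl

theorem Dv_mul {E : Type*} [NormedAddCommGroup E] [NormedSpace ℝ E] {U V : E → ℝ} (w p : E)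
    (hU : Differentiable ℝ U) (hV : Differentiable ℝ V) :
    Dv w (fun z => U z * V z) p = Dv w U p * V p + U p * Dv w V p := by
  unfold Dv
  rw [fderiv_fun_mul (hU p) (hV p)]
  simp; ring

theorem Dv_const_mul {E : Type*} [NormedAddCommGroup E] [NormedSpace ℝ E] {U : E → ℝ} (w p : E)
    (c : ℝ) (hU : Differentiable ℝ U) :
    Dv w (fun z => c * U z) p = c * Dv w U p := by
  unfold Dv
  rw [fderiv_const_mul (hU p)]; rfl

theorem Dv_sum {E ι : Type*} [NormedAddCommGroup E] [NormedSpace ℝ E] [Fintype ι] {U : ι → E → ℝ}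
    (w p : E) (hU : ∀ i, Differentiable ℝ (U i)) :
    Dv w (fun z => ∑ i, U i z) p = ∑ i, Dv w (U i) p := by
  unfold Dv
  rw [fderiv_fun_sum (fun i _ => hU i p)]
  simp

theorem Dv_sq {E : Type*} [NormedAddCommGroup E] [NormedSpace ℝ E] {U : E → ℝ} (w p : E)
    (hU : Differentiable ℝ U) :
    Dv w (fun z => U z ^ 2) p = 2 * U p * Dv w U p := by
  simp only [pow_two]
  rw [Dv_mul w p hU hU]; ring

/-- The algebraic dissipation estimate. -/
theorem lin_alg (ι : Type*) [Fintype ι] (lam K : ℝ) (hlam : 0 < lam) (hK : 0 ≤ K) :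
    ∃ C : ℝ, 0 ≤ C ∧ ∀ (M : ι → ι → ℝ) (ξ G θ : ι → ℝ) (s : ℝ), 0 ≤ s →
      (lam * ∑ i, ξ i ^ 2 ≤ ∑ i, ∑ j, ξ i * M i j * ξ j) →
      (∀ i j, |M i j| ≤ K) → (∀ i, |G i| ≤ K * s) → (∀ i, |θ i| ≤ K * s) →
      ∑ i, (θ i - ξ i) * (∑ j, M i j * ξ j + G i) ≤ C * s ^ 2 := by
  set n : ℝ := (Fintype.card ι : ℝ) with hn
  have hn0 : 0 ≤ n := by positivity
  set δ : ℝ := lam / (2 * (n + 1)) with hδ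
  have hδ0 : 0 < δ := by positivity
  have hnδ : n * δ ≤ lam / 2 := by
    rw [hδ, ← mul_div_assoc, div_le_div_iff₀ (by positivity) (by norm_num)]
    nlinarith
  refine ⟨n * (n * (K ^ 4 / δ)) + n * (K ^ 2 / lam) + n * K ^ 2, by positivity, ?_⟩
  intro M ξ G θ s hs hq hM hG hθ
  have e1 : ∑ i, (θ i - ξ i) * (∑ j, M i j * ξ j + G i) =
      (∑ i, ∑ j, θ i * M i j * ξ j) - (∑ i, ∑ j, ξ i * M i j * ξ j)
        + ∑ i, (-(ξ i) * G i) + ∑ i, θ i * G i := by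
    rw [← Finset.sum_sub_distrib, ← Finset.sum_add_distrib, ← Finset.sum_add_distrib]
    refine Finset.sum_congr rfl fun i _ => ?_
    have a1 : ∀ z : ι → ℝ, ∑ j, z i * M i j * ξ j = z i * ∑ j, M i j * ξ j := by
      intro z; rw [Finset.mul_sum]; refine Finset.sum_congr rfl fun j _ => by ring
    rw [a1 θ, a1 ξ]; ring
  have b1 : ∑ i, ∑ j, θ i * M i j * ξ j ≤ ∑ _i : ι, ∑ j, (δ * ξ j ^ 2 + K ^ 4 / δ * s ^ 2) := by
    refine Finset.sum_le_sum fun i _ => Finset.sum_le_sum fun j _ => ?_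
    have h1 : |θ i * M i j| ≤ K ^ 2 * s := by
      rw [abs_mul]
      calc |θ i| * |M i j| ≤ (K * s) * K :=
            mul_le_mul (hθ i) (hM i j) (abs_nonneg _) (by positivity)
        _ = K ^ 2 * s := by ring
    have h2 : (θ i * M i j) ^ 2 ≤ (K ^ 2 * s) ^ 2 := sq_le_sq' (abs_le.1 h1).1 (abs_le.1 h1).2
    have h3 : K ^ 4 / δ * s ^ 2 = (K ^ 2 * s) ^ 2 / δ := by ring
    have h4 : (θ i * M i j) ^ 2 / δ ≤ (K ^ 2 * s) ^ 2 / δ := by gcongr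
    have h5 : θ i * M i j * ξ j ≤ δ * ξ j ^ 2 + (θ i * M i j) ^ 2 / δ := by
      have h6 : δ * ξ j ^ 2 + (θ i * M i j) ^ 2 / δ - θ i * M i j * ξ j =
        ((δ * ξ j) ^ 2 + (θ i * M i j) ^ 2 - (δ * ξ j) * (θ i * M i j)) / δ := by
        field_simp
      have h7 : 0 ≤ ((δ * ξ j) ^ 2 + (θ i * M i j) ^ 2 - (δ * ξ j) * (θ i * M i j)) / δ := by
        apply div_nonneg _ hδ0.le
        nlinarith [sq_nonneg (δ * ξ j - θ i * M i j), sq_nonneg (δ * ξ j + θ i * M i j)]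
      linarith
    linarith
  have b2 : ∑ i, (-(ξ i) * G i) ≤ ∑ i, (lam / 4 * ξ i ^ 2 + K ^ 2 / lam * s ^ 2) := by
    refine Finset.sum_le_sum fun i _ => ?_
    have h2 : (G i) ^ 2 ≤ (K * s) ^ 2 := sq_le_sq' (abs_le.1 (hG i)).1 (abs_le.1 (hG i)).2
    have h4 : (G i) ^ 2 / lam ≤ (K * s) ^ 2 / lam := by gcongr
    have h3 : K ^ 2 / lam * s ^ 2 = (K * s) ^ 2 / lam := by ring
    have h6 : lam / 4 * ξ i ^ 2 + (G i) ^ 2 / lam - (-(ξ i) * G i) =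
        (lam / 2 * ξ i + G i) ^ 2 / lam := by
      field_simp; ring
    have h7 : 0 ≤ (lam / 2 * ξ i + G i) ^ 2 / lam := by positivity
    linarith
  have b3 : ∑ i, θ i * G i ≤ ∑ _i : ι, K ^ 2 * s ^ 2 := by
    refine Finset.sum_le_sum fun i _ => ?_
    calc θ i * G i ≤ |θ i * G i| := le_abs_self _
      _ = |θ i| * |G i| := abs_mul _ _
      _ ≤ (K * s) * (K * s) := mul_le_mul (hθ i) (hG i) (abs_nonneg _) (by positivity)
      _ = K ^ 2 * s ^ 2 := by ring
  have hcard : ((Finset.univ : Finset ι).card : ℝ) = n := by simp [hn]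
  simp only [Finset.sum_add_distrib, Finset.sum_const, nsmul_eq_mul, hcard,
    ← Finset.mul_sum] at b1 b2 b3
  have hS : 0 ≤ ∑ i, ξ i ^ 2 := Finset.sum_nonneg fun i _ => sq_nonneg _
  have b4 : n * (δ * ∑ i, ξ i ^ 2) ≤ lam / 2 * ∑ i, ξ i ^ 2 := by
    rw [← mul_assoc]; exact mul_le_mul_of_nonneg_right hnδ hS
  have b5 : 0 ≤ lam * ∑ i, ξ i ^ 2 := by positivity
  rw [e1]
  nlinarith

theorem cell_compact (d : ℕ) : IsCompact (cell d) := isCompact_Icc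

theorem bound_compact {d : ℕ} {F : Type*} [NormedAddCommGroup F] (T : ℝ)
    {g : ℝ × (Fin d → ℝ) → F} (hg : Continuous g) :
    ∃ K : ℝ, 0 ≤ K ∧ ∀ t ∈ Set.Icc (0:ℝ) T, ∀ x ∈ cell d, ‖g (t, x)‖ ≤ K := by
  obtain ⟨K, hK⟩ := ((isCompact_Icc (a := (0:ℝ)) (b := T)).prod
    (cell_compact d)).exists_bound_of_continuousOn hg.continuousOn
  exact ⟨max K 0, le_max_right _ _, fun t ht x hx => (hK (t, x) ⟨ht, hx⟩).trans (le_max_left _ _)⟩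

theorem lip_ball {E F : Type*} [NormedAddCommGroup E] [NormedSpace ℝ E] [FiniteDimensional ℝ E]
    [NormedAddCommGroup F] [NormedSpace ℝ F] {g : E → F} (hg : ContDiff ℝ (⊤ : ℕ∞) g) (R : ℝ) :
    ∃ K : ℝ, 0 ≤ K ∧ ∀ q q' : E, ‖q‖ ≤ R → ‖q'‖ ≤ R → ‖g q - g q'‖ ≤ K * ‖q - q'‖ := by
  have : ProperSpace E := FiniteDimensional.proper ℝ E
  have h1 : ContDiff ℝ (⊤ : ℕ∞) (fderiv ℝ g) := hg.fderiv_right (m := (⊤ : ℕ∞)) (by simp)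
  obtain ⟨K, hK⟩ := (isCompact_closedBall (0 : E) R).exists_bound_of_continuousOn
    h1.continuous.continuousOn
  refine ⟨max K 0, le_max_right _ _, fun q q' hq hq' => ?_⟩
  exact (convex_closedBall (0:E) R).norm_image_sub_le_of_norm_fderiv_le
    (fun x _ => smooth_differentiable hg x) (fun x hx => (hK x hx).trans (le_max_left _ _))
    (by simpa using hq') (by simpa using hq)

theorem div_zero_int {d : ℕ} (hd : 1 ≤ d) (W : Fin d → (Fin d → ℝ) → ℝ)
    (hW : ∀ i, ContDiff ℝ (⊤ : ℕ∞) (W i)) (hp : ∀ i, ZPeriodic (W i)) :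
    ∫ x in cell d, ∑ i, fderiv ℝ (W i) x (Pi.single i 1) = 0 := by
  obtain ⟨n, rfl⟩ : ∃ n, d = n + 1 := ⟨d - 1, by omega⟩
  have hcont : Continuous fun x => ∑ i, fderiv ℝ (W i) x (Pi.single i 1) :=
    continuous_finsetSum _ fun i _ => (Dv_contDiff (Pi.single i 1) (hW i)).continuous
  unfold cell
  have := integral_divergence_of_hasFDerivAt_off_countable' (0 : Fin (n+1) → ℝ) 1
    (by intro i; simp) W (fun i => fderiv ℝ (W i)) ∅ Set.countable_empty
    (fun i => (hW i).continuous.continuousOn)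
    (fun x _ i => (smooth_differentiable (hW i) x).hasFDerivAt)
    (hcont.continuousOn.integrableOn_compact isCompact_Icc)
  rw [this]
  refine Finset.sum_eq_zero fun i _ => ?_
  rw [sub_eq_zero]
  refine integral_congr_ae (Filter.Eventually.of_forall fun y => ?_)
  have := hp i (i.insertNth (0:ℝ) y) (Pi.single i 1)
  simp only [Pi.one_apply, Pi.zero_apply]
  rw [← this]
  congr 1
  ext j
  refine Fin.succAboveCases i ?_ (fun k => ?_) j
  · simp
  · simp

theorem energy_deriv {d : ℕ} {e : ℝ × (Fin d → ℝ) → ℝ} (he : ContDiff ℝ (⊤ : ℕ∞) e) (t : ℝ) :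
    HasDerivAt (fun s => ∫ x in cell d, e (s, x)) (∫ x in cell d, Dv (1, 0) e (t, x)) t := by
  have hD : Continuous (Dv (1, 0) e) := (Dv_contDiff _ he).continuous
  obtain ⟨K, hK⟩ := ((isCompact_closedBall t 1).prod
    (cell_compact d)).exists_bound_of_continuousOn hD.continuousOn
  have hfin : volume (cell d) < ⊤ := (cell_compact d).measure_lt_top
  have hms : MeasurableSet (cell d) := (cell_compact d).measurableSet
  refine (hasDerivAt_integral_of_dominated_loc_of_deriv_le (s := Metric.closedBall t 1)
    (bound := fun _ => K) (Metric.closedBall_mem_nhds t one_pos) ?_ ?_ ?_ ?_ ?_ ?_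
    (F' := fun s x => Dv (1, 0) e (s, x))).2
  · exact Filter.Eventually.of_forall fun s =>
      (he.continuous.comp (Continuous.prodMk_right s)).aestronglyMeasurable
  · exact (he.continuous.comp (Continuous.prodMk_right t)).continuousOn.integrableOn_compact
      (cell_compact d)
  · exact (hD.comp (Continuous.prodMk_right t)).aestronglyMeasurable
  · exact (ae_restrict_iff' hms).2 (Filter.Eventually.of_forall fun x hx s hs => hK (s, x) ⟨hs, hx⟩)
  · exact integrableOn_const hfin.ne
  · exact Filter.Eventually.of_forall fun x s _ => slice_t' (smooth_differentiable he) s x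

theorem gronwall_zero {T C : ℝ} {E E' : ℝ → ℝ} (h0 : E 0 = 0)
    (hpos : ∀ t, 0 ≤ E t) (hd : ∀ t, HasDerivAt E (E' t) t)
    (hle : ∀ t ∈ Set.Icc (0:ℝ) T, E' t ≤ C * E t) : ∀ t ∈ Set.Icc (0:ℝ) T, E t = 0 := by
  have hder : ∀ t, HasDerivAt (fun s => Real.exp (-C * s) * E s)
      (Real.exp (-C * t) * (E' t - C * E t)) t := by
    intro t
    have h1 : HasDerivAt (fun s => Real.exp (-C * s)) (Real.exp (-C * t) * (-C * 1)) t :=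
      ((hasDerivAt_id t).const_mul (-C)).exp
    exact (h1.mul (hd t)).congr_deriv (by ring)
  have hanti : AntitoneOn (fun s => Real.exp (-C * s) * E s) (Set.Icc 0 T) := by
    apply antitoneOn_of_deriv_nonpos (convex_Icc 0 T)
    · exact fun t _ => (hder t).continuousAt.continuousWithinAt
    · exact fun t _ => (hder t).differentiableAt.differentiableWithinAt
    · intro t ht
      rw [(hder t).deriv]
      have := hle t (interior_subset ht)
      exact mul_nonpos_of_nonneg_of_nonpos (Real.exp_pos _).le (by linarith)
  intro t ht
  have h1 := hanti (Set.left_mem_Icc.2 (ht.1.trans ht.2)) ht ht.1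
  simp only [h0, mul_zero] at h1
  have h2 : E t ≤ 0 := by
    by_contra hh
    push Not at hh
    have := mul_pos (Real.exp_pos (-C * t)) hh
    linarith
  exact le_antisymm h2 (hpos t)

theorem zero_of_int {d : ℕ} {g : (Fin d → ℝ) → ℝ} (hg : Continuous g) (h0 : ∀ x, 0 ≤ g x)
    (hi : ∫ x in cell d, g x = 0) : ∀ x ∈ cell d, g x = 0 := by
  rw [setIntegral_eq_zero_iff_of_nonneg_ae (Filter.Eventually.of_forall h0)
    (hg.continuousOn.integrableOn_compact (cell_compact d))] at hi
  refine fun x hx => Measure.eqOn_of_ae_eq hi hg.continuousOn continuousOn_const ?_ hx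
  have hne : (interior (cell d)).Nonempty := by
    refine ⟨fun _ => 1 / 2, ?_⟩
    rw [cell, ← Set.pi_univ_Icc, interior_pi_set Set.finite_univ]
    intro i _
    simp only [interior_Icc, Pi.zero_apply, Pi.one_apply]
    constructor <;> norm_num
  have hcv : Convex ℝ (cell d) := convex_Icc _ _
  rw [hcv.closure_interior_eq_closure_of_nonempty_interior hne]
  exact subset_closure

theorem per_cell {d : ℕ} {g : (Fin d → ℝ) → ℝ} (hg : ZPeriodic g) (h : ∀ x ∈ cell d, g x = 0) :
    ∀ x, g x = 0 := by
  intro x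
  rw [← hg x (fun i => -⌊x i⌋)]
  apply h
  constructor
  · intro i
    have := Int.floor_le (x i)
    simpa using this
  · intro i
    have := Int.lt_floor_add_one (x i)
    simp; linarith

/-- Periodicity in space of space-time functions. -/
def XPer {d : ℕ} {F : Type*} (U : ℝ × (Fin d → ℝ) → F) : Prop :=
  ∀ (t : ℝ) (x : Fin d → ℝ) (k : Fin d → ℤ), U (t, x + fun i => (k i : ℝ)) = U (t, x)

theorem XPer_Dv {d : ℕ} {U : ℝ × (Fin d → ℝ) → ℝ} (h : XPer U) (w : ℝ × (Fin d → ℝ)) :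
    XPer (Dv w U) := by
  intro t x k
  have h1 : (fun p : ℝ × (Fin d → ℝ) => U (p + (0, fun i => (k i : ℝ)))) = U := by
    funext p
    obtain ⟨s, y⟩ := p
    simpa using h s y k
  have h2 : (t, x + fun i => (k i : ℝ)) = (t, x) + ((0 : ℝ), fun i => (k i : ℝ)) := by simp
  unfold Dv
  rw [h2, ← fderiv_comp_add_right, h1]

end Aux

section Core

/-- Spatial unit directions in space-time. -/
def ex {d : ℕ} (i : Fin d) : ℝ × (Fin d → ℝ) := (0, Pi.single i 1)

/-- Space-time version of the mobility arguments. -/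
def mob {d : ℕ} (P H : ℝ × (Fin d → ℝ) → ℝ) (p : ℝ × (Fin d → ℝ)) : Args d :=
  (P p, fun i => Dv (ex i) P p, H p, fun i => Dv (ex i) H p)

/-- The vector `(∇U, V)` in space-time. -/
def zeta {d : ℕ} (U V : ℝ × (Fin d → ℝ) → ℝ) (p : ℝ × (Fin d → ℝ)) : (Fin d ⊕ Unit) → ℝ :=
  dvec (fun i => Dv (ex i) U p) (V p)

/-- The flux vector. -/
def flux {d : ℕ} (L : Args d → Matrix (Fin d ⊕ Unit) (Fin d ⊕ Unit) ℝ)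
    (P H Mr Me : ℝ × (Fin d → ℝ) → ℝ) (k : Fin d ⊕ Unit) (p : ℝ × (Fin d → ℝ)) : ℝ :=
  ∑ l, L (mob P H p) k l * zeta Mr Me p l

/-- Gradient of `φ(P,H)` and value of `ψ(P,H)` as functions of the mobility arguments. -/
def Phi {d : ℕ} (φ ψ : ℝ × ℝ → ℝ) (q : Args d) : (Fin d ⊕ Unit) → ℝ :=
  dvec (fun i => fderiv ℝ φ (q.1, q.2.2.1) (q.2.1 i, q.2.2.2 i)) (ψ (q.1, q.2.2.1))

theorem mob_smooth {d : ℕ} {P H : ℝ × (Fin d → ℝ) → ℝ} (hP : ContDiff ℝ (⊤ : ℕ∞) P)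
    (hH : ContDiff ℝ (⊤ : ℕ∞) H) : ContDiff ℝ (⊤ : ℕ∞) (mob P H) :=
  hP.prodMk ((contDiff_pi.2 fun i => Dv_contDiff (ex i) hP).prodMk
    (hH.prodMk (contDiff_pi.2 fun i => Dv_contDiff (ex i) hH)))

theorem zeta_smooth {d : ℕ} {P H : ℝ × (Fin d → ℝ) → ℝ} (hP : ContDiff ℝ (⊤ : ℕ∞) P)
    (hH : ContDiff ℝ (⊤ : ℕ∞) H) : ContDiff ℝ (⊤ : ℕ∞) (zeta P H) := by
  refine contDiff_pi.2 fun k => ?_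
  rcases k with i | u
  · exact Dv_contDiff (ex i) hP
  · exact hH

theorem Phi_smooth {d : ℕ} {φ ψ : ℝ × ℝ → ℝ} (hφ : ContDiff ℝ (⊤ : ℕ∞) φ)
    (hψ : ContDiff ℝ (⊤ : ℕ∞) ψ) : ContDiff ℝ (⊤ : ℕ∞) (Phi (d := d) φ ψ) := by
  have h1 : ContDiff ℝ (⊤ : ℕ∞) (fderiv ℝ φ) := hφ.fderiv_right (m := (⊤ : ℕ∞)) (by simp)
  have h2 : ContDiff ℝ (⊤ : ℕ∞) (fun q : Args d => (q.1, q.2.2.1)) := by fun_prop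
  refine contDiff_pi.2 fun k => ?_
  rcases k with i | u
  · have h3 : ContDiff ℝ (⊤ : ℕ∞) (fun q : Args d => (q.2.1 i, q.2.2.2 i)) := by fun_prop
    exact (h1.comp h2).clm_apply h3
  · exact hψ.comp h2

theorem flux_smooth {d : ℕ} {L : Args d → Matrix (Fin d ⊕ Unit) (Fin d ⊕ Unit) ℝ}
    (hL : ∀ i j, ContDiff ℝ (⊤ : ℕ∞) fun q : Args d => L q i j)
    {P H Mr Me : ℝ × (Fin d → ℝ) → ℝ} (hP : ContDiff ℝ (⊤ : ℕ∞) P)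
    (hH : ContDiff ℝ (⊤ : ℕ∞) H) (hMr : ContDiff ℝ (⊤ : ℕ∞) Mr)
    (hMe : ContDiff ℝ (⊤ : ℕ∞) Me) (k : Fin d ⊕ Unit) :
    ContDiff ℝ (⊤ : ℕ∞) (flux L P H Mr Me k) := by
  refine ContDiff.sum fun l _ => ?_
  exact ((hL k l).comp (mob_smooth hP hH)).mul (contDiff_pi.1 (zeta_smooth hMr hMe) l)

theorem XPer_mob {d : ℕ} {P H : ℝ × (Fin d → ℝ) → ℝ} (hP : XPer P) (hH : XPer H) :
    XPer (mob P H) := by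
  intro t x k
  simp only [mob, hP t x k, hH t x k, fun i => XPer_Dv hP (ex i) t x k,
    fun i => XPer_Dv hH (ex i) t x k]

theorem XPer_zeta {d : ℕ} {P H : ℝ × (Fin d → ℝ) → ℝ} (hP : XPer P) (hH : XPer H) :
    XPer (zeta P H) := by
  intro t x k
  simp only [zeta, hH t x k, fun i => XPer_Dv hP (ex i) t x k]

theorem XPer_flux {d : ℕ} {L : Args d → Matrix (Fin d ⊕ Unit) (Fin d ⊕ Unit) ℝ}
    {P H Mr Me : ℝ × (Fin d → ℝ) → ℝ} (hP : XPer P) (hH : XPer H) (hMr : XPer Mr)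
    (hMe : XPer Me) (k : Fin d ⊕ Unit) : XPer (flux L P H Mr Me k) := by
  intro t x k
  simp only [flux, XPer_mob hP hH t x k, XPer_zeta hMr hMe t x k]

theorem slice_congr {d : ℕ} {A B : ℝ × (Fin d → ℝ) → ℝ} (hA : Differentiable ℝ A)
    (hB : Differentiable ℝ B) (t : ℝ) (h : ∀ y, A (t, y) = B (t, y)) (x : Fin d → ℝ) (i : Fin d) :
    Dv (ex i) A (t, x) = Dv (ex i) B (t, x) := by
  unfold ex
  rw [← slice_x hA, ← slice_x hB]
  simp only [h]

/-- The energy density. -/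
def edens {E ι : Type*} [NormedAddCommGroup E] [NormedSpace ℝ E] [Fintype ι] (γρ γη : ℝ)
    (b : ι → E) (U V : E → ℝ) (p : E) : ℝ :=
  γρ / 2 * ∑ i, Dv (b i) U p ^ 2 + γη / 2 * ∑ i, Dv (b i) V p ^ 2 + 1 / 2 * U p ^ 2
    + 1 / 2 * V p ^ 2

/-- `U - γ ΔU`. -/
def Zf {E ι : Type*} [NormedAddCommGroup E] [NormedSpace ℝ E] [Fintype ι] (γ : ℝ)
    (b : ι → E) (U : E → ℝ) (p : E) : ℝ :=
  U p - γ * ∑ i, Dv (b i) (Dv (b i) U) p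

/-- The flux in the local energy identity. -/
def Wf {E ι : Type*} [NormedAddCommGroup E] [NormedSpace ℝ E] [Fintype ι] (γρ γη : ℝ)
    (a : E) (b : ι → E) (U V : E → ℝ) (F : ι → E → ℝ) (i : ι) (p : E) : ℝ :=
  γρ * (Dv a U p * Dv (b i) U p) + γη * (Dv a V p * Dv (b i) V p) + Zf γρ b U p * F i p

theorem Zf_smooth {E ι : Type*} [NormedAddCommGroup E] [NormedSpace ℝ E] [Fintype ι] (γ : ℝ)
    (b : ι → E) {U : E → ℝ} (hU : ContDiff ℝ (⊤ : ℕ∞) U) : ContDiff ℝ (⊤ : ℕ∞) (Zf γ b U) := by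
  refine hU.sub (contDiff_const.mul (ContDiff.sum fun i _ => ?_))
  exact Dv_contDiff _ (Dv_contDiff _ hU)

theorem edens_smooth {E ι : Type*} [NormedAddCommGroup E] [NormedSpace ℝ E] [Fintype ι]
    (γρ γη : ℝ) (b : ι → E) {U V : E → ℝ} (hU : ContDiff ℝ (⊤ : ℕ∞) U)
    (hV : ContDiff ℝ (⊤ : ℕ∞) V) : ContDiff ℝ (⊤ : ℕ∞) (edens γρ γη b U V) := by
  have h1 := fun i => Dv_contDiff (b i) hU
  have h2 := fun i => Dv_contDiff (b i) hV
  unfold edens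
  exact (((contDiff_const.mul (ContDiff.sum fun i _ => (h1 i).pow 2)).add
    (contDiff_const.mul (ContDiff.sum fun i _ => (h2 i).pow 2))).add
    (contDiff_const.mul (hU.pow 2))).add (contDiff_const.mul (hV.pow 2))

theorem Wf_smooth {E ι : Type*} [NormedAddCommGroup E] [NormedSpace ℝ E] [Fintype ι]
    (γρ γη : ℝ) (a : E) (b : ι → E) {U V : E → ℝ} {F : ι → E → ℝ} (hU : ContDiff ℝ (⊤ : ℕ∞) U)
    (hV : ContDiff ℝ (⊤ : ℕ∞) V) (hF : ∀ i, ContDiff ℝ (⊤ : ℕ∞) (F i)) (i : ι) :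
    ContDiff ℝ (⊤ : ℕ∞) (Wf γρ γη a b U V F i) := by
  exact ((contDiff_const.mul ((Dv_contDiff a hU).mul (Dv_contDiff (b i) hU))).add
    (contDiff_const.mul ((Dv_contDiff a hV).mul (Dv_contDiff (b i) hV)))).add
    ((Zf_smooth γρ b hU).mul (hF i))

/-- The local energy identity. -/
theorem energy_identity {E ι : Type*} [NormedAddCommGroup E] [NormedSpace ℝ E] [Fintype ι]
    (γρ γη : ℝ) (a : E) (b : ι → E) {U V : E → ℝ} {F : ι → E → ℝ} (hU : ContDiff ℝ (⊤ : ℕ∞) U)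
    (hV : ContDiff ℝ (⊤ : ℕ∞) V) (hF : ∀ i, ContDiff ℝ (⊤ : ℕ∞) (F i)) (p : E)
    (hdiv : Dv a U p = ∑ i, Dv (b i) (F i) p) :
    Dv a (edens γρ γη b U V) p = ∑ i, Dv (b i) (Wf γρ γη a b U V F i) p
      + (Zf γη b V p * Dv a V p - ∑ i, Dv (b i) (Zf γρ b U) p * F i p) := by
  have sd := @smooth_differentiable E ℝ _ _ _ _
  have dU := sd hU
  have dV := sd hV
  have h1 := fun c => sd (Dv_contDiff c hU)
  have h2 := fun c => sd (Dv_contDiff c hV)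
  have hZ := sd (Zf_smooth γρ b hU)
  have dF := fun i => sd (hF i)
  have e1 : Dv a (edens γρ γη b U V) p =
      γρ * ∑ i, Dv (b i) U p * Dv a (Dv (b i) U) p
      + γη * ∑ i, Dv (b i) V p * Dv a (Dv (b i) V) p + U p * Dv a U p + V p * Dv a V p := by
    unfold edens
    have q1 : Differentiable ℝ fun z => ∑ i, Dv (b i) U z ^ 2 :=
      Differentiable.fun_sum fun i _ => (h1 (b i)).pow 2
    have q2 : Differentiable ℝ fun z => ∑ i, Dv (b i) V z ^ 2 :=
      Differentiable.fun_sum fun i _ => (h2 (b i)).pow 2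
    have q3 : Differentiable ℝ fun z => U z ^ 2 := dU.pow 2
    have q4 : Differentiable ℝ fun z => V z ^ 2 := dV.pow 2
    rw [Dv_add _ _ (((q1.const_mul _).fun_add (q2.const_mul _)).fun_add (q3.const_mul _)) (q4.const_mul _),
      Dv_add _ _ ((q1.const_mul _).fun_add (q2.const_mul _)) (q3.const_mul _),
      Dv_add _ _ (q1.const_mul _) (q2.const_mul _), Dv_const_mul _ _ _ q1, Dv_const_mul _ _ _ q2,
      Dv_const_mul _ _ _ q3, Dv_const_mul _ _ _ q4,
      Dv_sum _ _ (fun i => (h1 (b i)).fun_pow 2), Dv_sum _ _ (fun i => (h2 (b i)).fun_pow 2),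
      Dv_sq _ _ dU, Dv_sq _ _ dV]
    simp only [fun i => Dv_sq a p (h1 (b i)), fun i => Dv_sq a p (h2 (b i)), mul_assoc,
      ← Finset.mul_sum]
    ring
  have e2 : ∀ i, Dv (b i) (Wf γρ γη a b U V F i) p =
      γρ * (Dv (b i) U p * Dv a (Dv (b i) U) p) + γρ * Dv a U p * Dv (b i) (Dv (b i) U) p
      + (γη * (Dv (b i) V p * Dv a (Dv (b i) V) p) + γη * Dv a V p * Dv (b i) (Dv (b i) V) p)
      + (Dv (b i) (Zf γρ b U) p * F i p + Zf γρ b U p * Dv (b i) (F i) p) := by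
    intro i
    unfold Wf
    have q1 : Differentiable ℝ fun z => Dv a U z * Dv (b i) U z := (h1 a).mul (h1 (b i))
    have q2 : Differentiable ℝ fun z => Dv a V z * Dv (b i) V z := (h2 a).mul (h2 (b i))
    have q3 : Differentiable ℝ fun z => Zf γρ b U z * F i z := hZ.mul (dF i)
    rw [Dv_add _ _ ((q1.const_mul _).fun_add (q2.const_mul _)) q3,
      Dv_add _ _ (q1.const_mul _) (q2.const_mul _), Dv_const_mul _ _ _ q1, Dv_const_mul _ _ _ q2,
      Dv_mul _ _ (h1 a) (h1 (b i)), Dv_mul _ _ (h2 a) (h2 (b i)), Dv_mul _ _ hZ (dF i),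
      Dv_comm (b i) a hU, Dv_comm (b i) a hV]
    ring
  rw [e1, Finset.sum_congr rfl fun i _ => e2 i]
  simp only [Finset.sum_add_distrib, ← Finset.mul_sum]
  rw [← hdiv]
  unfold Zf
  ring

theorem mob_sq_le {d : ℕ} {γρ γη : ℝ} (hγρ : 0 < γρ) (hγη : 0 < γη)
    {P H Ph Hh : ℝ × (Fin d → ℝ) → ℝ}
    (hP : Differentiable ℝ P) (hH : Differentiable ℝ H) (hPh : Differentiable ℝ Ph)
    (hHh : Differentiable ℝ Hh) (p : ℝ × (Fin d → ℝ)) :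
    ‖mob P H p - mob Ph Hh p‖ ^ 2 ≤ (2 / γρ + 2 / γη + 2) *
      edens γρ γη (ex (d := d)) (fun z => P z - Ph z) (fun z => H z - Hh z) p := by
  set U := fun z => P z - Ph z with hU
  set V := fun z => H z - Hh z with hV
  set A := ∑ i : Fin d, Dv (ex i) U p ^ 2 with hA
  set B := ∑ i : Fin d, Dv (ex i) V p ^ 2 with hB
  have hA0 : 0 ≤ A := Finset.sum_nonneg fun i _ => sq_nonneg _
  have hB0 : 0 ≤ B := Finset.sum_nonneg fun i _ => sq_nonneg _
  have hAi : ∀ i : Fin d, Dv (ex i) U p ^ 2 ≤ A := fun i =>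
    Finset.single_le_sum (f := fun i => Dv (ex i) U p ^ 2) (fun i _ => sq_nonneg _)
      (Finset.mem_univ i)
  have hBi : ∀ i : Fin d, Dv (ex i) V p ^ 2 ≤ B := fun i =>
    Finset.single_le_sum (f := fun i => Dv (ex i) V p ^ 2) (fun i _ => sq_nonneg _)
      (Finset.mem_univ i)
  set Q := A + B + U p ^ 2 + V p ^ 2 with hQ
  have hU2 := sq_nonneg (U p)
  have hV2 := sq_nonneg (V p)
  have hQ0 : 0 ≤ Q := by positivity
  have hs : ‖mob P H p - mob Ph Hh p‖ ≤ Real.sqrt Q := by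
    simp only [mob, Prod.mk_sub_mk, norm_prod_le_iff, pi_norm_le_iff_of_nonneg (Real.sqrt_nonneg Q),
      Pi.sub_apply, Real.norm_eq_abs]
    refine ⟨Real.abs_le_sqrt ?_, fun i => Real.abs_le_sqrt ?_, Real.abs_le_sqrt ?_,
      fun i => Real.abs_le_sqrt ?_⟩
    · change U p ^ 2 ≤ Q
      linarith
    · rw [← Dv_sub _ _ hP hPh]
      linarith [hAi i]
    · change V p ^ 2 ≤ Q
      linarith
    · rw [← Dv_sub _ _ hH hHh]
      linarith [hBi i]
  have hs2 : ‖mob P H p - mob Ph Hh p‖ ^ 2 ≤ Q := by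
    calc _ ≤ Real.sqrt Q ^ 2 := by gcongr
      _ = Q := Real.sq_sqrt hQ0
  have hed : edens γρ γη (ex (d := d)) U V p =
      γρ / 2 * A + γη / 2 * B + 1 / 2 * U p ^ 2 + 1 / 2 * V p ^ 2 := rfl
  have r1 : 2 / γρ * (γρ / 2 * A) = A := by field_simp
  have r2 : 2 / γη * (γη / 2 * B) = B := by field_simp
  have t1 : 0 ≤ γρ / 2 * A := by positivity
  have t2 : 0 ≤ γη / 2 * B := by positivity
  have t3 : 0 ≤ 2 / γρ := by positivity
  have t4 : 0 ≤ 2 / γη := by positivity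
  have m1 : 0 ≤ 2 / γρ * (γη / 2 * B + 1 / 2 * U p ^ 2 + 1 / 2 * V p ^ 2) := by positivity
  have m2 : 0 ≤ 2 / γη * (γρ / 2 * A + 1 / 2 * U p ^ 2 + 1 / 2 * V p ^ 2) := by positivity
  rw [hed]
  linarith

theorem Dv_phi {d : ℕ} {φ : ℝ × ℝ → ℝ} (hφ : Differentiable ℝ φ)
    {P H : ℝ × (Fin d → ℝ) → ℝ} (hP : Differentiable ℝ P) (hH : Differentiable ℝ H)
    (w p : ℝ × (Fin d → ℝ)) :
    Dv w (fun z => φ (P z, H z)) p = fderiv ℝ φ (P p, H p) (Dv w P p, Dv w H p) := by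
  have h := (hφ (P p, H p)).hasFDerivAt.comp p ((hP p).hasFDerivAt.prodMk (hH p).hasFDerivAt)
  unfold Dv
  have h' : HasFDerivAt (fun z => φ (P z, H z)) _ p := h
  rw [h'.fderiv]
  rfl

/-- Space-time form of the system. -/
def Sol {d : ℕ} (T γρ γη : ℝ) (φ ψ : ℝ × ℝ → ℝ)
    (L : Args d → Matrix (Fin d ⊕ Unit) (Fin d ⊕ Unit) ℝ)
    (P H Mr Me : ℝ × (Fin d → ℝ) → ℝ) : Prop :=
  ∀ t ∈ Set.Icc (0:ℝ) T, ∀ x : Fin d → ℝ,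
    Dv (1, 0) P (t, x) = ∑ i, Dv (ex i) (flux L P H Mr Me (Sum.inl i)) (t, x) ∧
    Mr (t, x) = -γρ * ∑ i, Dv (ex i) (Dv (ex i) P) (t, x) + φ (P (t, x), H (t, x)) ∧
    Dv (1, 0) H (t, x) = -flux L P H Mr Me (Sum.inr ()) (t, x) ∧
    Me (t, x) = -γη * ∑ i, Dv (ex i) (Dv (ex i) H) (t, x) + ψ (P (t, x), H (t, x))

theorem Zf_sub {d : ℕ} (γ : ℝ) {P Ph : ℝ × (Fin d → ℝ) → ℝ} (hP : ContDiff ℝ (⊤ : ℕ∞) P)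
    (hPh : ContDiff ℝ (⊤ : ℕ∞) Ph) (p : ℝ × (Fin d → ℝ)) :
    Zf γ (ex (d := d)) (fun z => P z - Ph z) p =
      P p - Ph p + (-γ * ∑ i : Fin d, Dv (ex i) (Dv (ex i) P) p)
        - (-γ * ∑ i : Fin d, Dv (ex i) (Dv (ex i) Ph) p) := by
  have h : ∀ i : Fin d, Dv (ex i) (Dv (ex i) fun z => P z - Ph z) p
      = Dv (ex i) (Dv (ex i) P) p - Dv (ex i) (Dv (ex i) Ph) p := by
    intro i
    have h1 : (Dv (ex i) fun z => P z - Ph z) = fun z => Dv (ex i) P z - Dv (ex i) Ph z := by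
      funext z
      exact Dv_sub _ _ (smooth_differentiable hP) (smooth_differentiable hPh)
    rw [h1, Dv_sub _ _ (smooth_differentiable (Dv_contDiff _ hP))
      (smooth_differentiable (Dv_contDiff _ hPh))]
  unfold Zf
  simp only [h, Finset.sum_sub_distrib]
  ring

/-- The remainder in the energy identity is controlled by the energy. -/
theorem remainder_bound {d : ℕ} (T γρ γη lam0 : ℝ) (hlam0 : 0 < lam0)
    (φ ψ : ℝ × ℝ → ℝ) (hφ : ContDiff ℝ (⊤ : ℕ∞) φ) (hψ : ContDiff ℝ (⊤ : ℕ∞) ψ)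
    (L : Args d → Matrix (Fin d ⊕ Unit) (Fin d ⊕ Unit) ℝ)
    (hL : ∀ i j, ContDiff ℝ (⊤ : ℕ∞) fun q : Args d => L q i j)
    (hLlb : ∀ q : Args d, ∀ ξ : (Fin d ⊕ Unit) → ℝ,
      lam0 * ∑ i, ξ i ^ 2 ≤ qform (L q) ξ)
    (P H Mr Me Ph Hh Mrh Meh : ℝ × (Fin d → ℝ) → ℝ)
    (hP : ContDiff ℝ (⊤ : ℕ∞) P) (hH : ContDiff ℝ (⊤ : ℕ∞) H)
    (hMr : ContDiff ℝ (⊤ : ℕ∞) Mr) (hMe : ContDiff ℝ (⊤ : ℕ∞) Me)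
    (hPh : ContDiff ℝ (⊤ : ℕ∞) Ph) (hHh : ContDiff ℝ (⊤ : ℕ∞) Hh)
    (hMrh : ContDiff ℝ (⊤ : ℕ∞) Mrh) (hMeh : ContDiff ℝ (⊤ : ℕ∞) Meh)
    (hS : Sol T γρ γη φ ψ L P H Mr Me) (hSh : Sol T γρ γη φ ψ L Ph Hh Mrh Meh) :
    ∃ C : ℝ, 0 ≤ C ∧ ∀ t ∈ Set.Icc (0:ℝ) T, ∀ x ∈ cell d,
      Zf γη (ex (d := d)) (fun z => H z - Hh z) (t, x) * Dv (1, 0) (fun z => H z - Hh z) (t, x)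
      - ∑ i, Dv (ex i) (Zf γρ (ex (d := d)) (fun z => P z - Ph z)) (t, x)
        * (flux L P H Mr Me (Sum.inl i) (t, x) - flux L Ph Hh Mrh Meh (Sum.inl i) (t, x))
      ≤ C * ‖mob P H (t, x) - mob Ph Hh (t, x)‖ ^ 2 := by
  have sd := @smooth_differentiable (ℝ × (Fin d → ℝ)) ℝ _ _ _ _
  have hLs : ContDiff ℝ (⊤ : ℕ∞) (fun q : Args d => fun (i : Fin d ⊕ Unit) (j : Fin d ⊕ Unit) =>
      L q i j) := contDiff_pi.2 fun i => contDiff_pi.2 fun j => hL i j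
  obtain ⟨R1, hR1, bR1⟩ := bound_compact T (mob_smooth hP hH).continuous
  obtain ⟨R2, hR2, bR2⟩ := bound_compact T (mob_smooth hPh hHh).continuous
  obtain ⟨Kz, hKz, bKz⟩ := bound_compact T (zeta_smooth hMrh hMeh).continuous
  obtain ⟨KL, hKL, bKL⟩ := bound_compact T (hLs.continuous.comp (mob_smooth hP hH).continuous)
  obtain ⟨KP, hKP, bKP⟩ := lip_ball (Phi_smooth (d := d) hφ hψ) (max R1 R2)
  obtain ⟨KM, hKM, bKM⟩ := lip_ball hLs (max R1 R2)
  set n : ℝ := (Fintype.card (Fin d ⊕ Unit) : ℝ) with hn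
  have hn0 : 0 ≤ n := by positivity
  have hK0 : 0 ≤ KL + (KP + 1) + n * (KM * Kz) := by positivity
  obtain ⟨C, hC, bC⟩ := lin_alg (Fin d ⊕ Unit) lam0 (KL + (KP + 1) + n * (KM * Kz)) hlam0 hK0
  refine ⟨C, hC, fun t ht x hx => ?_⟩
  set p : ℝ × (Fin d → ℝ) := (t, x) with hp
  set s := ‖mob P H p - mob Ph Hh p‖ with hs
  have hs0 : 0 ≤ s := norm_nonneg _
  have hq1 : ‖mob P H p‖ ≤ max R1 R2 := (bR1 t ht x hx).trans (le_max_left _ _)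
  have hq2 : ‖mob Ph Hh p‖ ≤ max R1 R2 := (bR2 t ht x hx).trans (le_max_right _ _)
  -- the ingredients
  let M : Fin d ⊕ Unit → Fin d ⊕ Unit → ℝ := fun i j => L (mob P H p) i j
  let ξ : Fin d ⊕ Unit → ℝ := fun k => zeta Mr Me p k - zeta Mrh Meh p k
  let G : Fin d ⊕ Unit → ℝ := fun k =>
    ∑ l, (L (mob P H p) k l - L (mob Ph Hh p) k l) * zeta Mrh Meh p l
  let θ : Fin d ⊕ Unit → ℝ := fun k => Phi φ ψ (mob P H p) k - Phi φ ψ (mob Ph Hh p) k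
    - (zeta P H p k - zeta Ph Hh p k)
  have hM : ∀ i j, |M i j| ≤ KL + (KP + 1) + n * (KM * Kz) := by
    intro i j
    have h1 : |M i j| ≤ KL := by
      have := bKL t ht x hx
      exact ((norm_le_pi_norm (M i) j).trans (norm_le_pi_norm M i)).trans this
    have : 0 ≤ n * (KM * Kz) := by positivity
    linarith
  have hG : ∀ k, |G k| ≤ (KL + (KP + 1) + n * (KM * Kz)) * s := by
    intro k
    have h1 : ∀ l, |(L (mob P H p) k l - L (mob Ph Hh p) k l) * zeta Mrh Meh p l|
        ≤ KM * Kz * s := by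
      intro l
      have a1 : |L (mob P H p) k l - L (mob Ph Hh p) k l| ≤ KM * s := by
        refine le_trans ?_ (bKM _ _ hq1 hq2)
        refine le_trans ?_ (norm_le_pi_norm _ k)
        exact norm_le_pi_norm ((fun (i : Fin d ⊕ Unit) (j : Fin d ⊕ Unit) => L (mob P H p) i j) k
          - (fun (i : Fin d ⊕ Unit) (j : Fin d ⊕ Unit) => L (mob Ph Hh p) i j) k) l
      have a2 : |zeta Mrh Meh p l| ≤ Kz := (norm_le_pi_norm _ l).trans (bKz t ht x hx)
      rw [abs_mul]
      calc _ ≤ (KM * s) * Kz := mul_le_mul a1 a2 (abs_nonneg _) (by positivity)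
        _ = KM * Kz * s := by ring
    have h2 : |G k| ≤ n * (KM * Kz * s) := by
      refine (Finset.abs_sum_le_sum_abs _ _).trans ?_
      refine (Finset.sum_le_sum fun l _ => h1 l).trans ?_
      rw [Finset.sum_const, nsmul_eq_mul, Finset.card_univ]
    have : 0 ≤ (KL + (KP + 1)) * s := by positivity
    nlinarith
  have hθ : ∀ k, |θ k| ≤ (KL + (KP + 1) + n * (KM * Kz)) * s := by
    intro k
    have h1 : |Phi φ ψ (mob P H p) k - Phi φ ψ (mob Ph Hh p) k| ≤ KP * s :=
      (norm_le_pi_norm (Phi φ ψ (mob P H p) - Phi φ ψ (mob Ph Hh p)) k).trans (bKP _ _ hq1 hq2)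
    have h2 : |zeta P H p k - zeta Ph Hh p k| ≤ s := by
      rcases k with i | u
      · have := (norm_le_pi_norm (mob P H p - mob Ph Hh p).2.1 i).trans
          ((norm_fst_le (mob P H p - mob Ph Hh p).2).trans (norm_snd_le (mob P H p - mob Ph Hh p)))
        exact this
      · have := (norm_fst_le (mob P H p - mob Ph Hh p).2.2).trans
          ((norm_snd_le (mob P H p - mob Ph Hh p).2).trans (norm_snd_le (mob P H p - mob Ph Hh p)))
        exact this
    have h3 : |θ k| ≤ KP * s + s := (abs_sub _ _).trans (add_le_add h1 h2)
    have : 0 ≤ (KL + n * (KM * Kz)) * s := by positivity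
    nlinarith
  have key := bC M ξ G θ s hs0 (hLlb _ ξ) hM hG hθ
  refine le_trans (le_of_eq ?_) key
  -- identification
  have hfl : ∀ k, ∑ j, M k j * ξ j + G k = flux L P H Mr Me k p - flux L Ph Hh Mrh Meh k p := by
    intro k
    simp only [flux, M, ξ, G, ← Finset.sum_add_distrib, ← Finset.sum_sub_distrib]
    refine Finset.sum_congr rfl fun l _ => by ring
  simp only [hfl]
  rw [Fintype.sum_sum_type]
  simp only [Finset.univ_unique, Finset.sum_singleton]
  have hφd : Differentiable ℝ φ := smooth_differentiable hφ
  have c1 : ∀ i : Fin d, Dv (ex i) (Zf γρ (ex (d := d)) (fun z => P z - Ph z)) p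
      = ξ (Sum.inl i) - θ (Sum.inl i) := by
    intro i
    have sφ : ContDiff ℝ (⊤ : ℕ∞) (fun z => φ (P z, H z)) := hφ.comp (hP.prodMk hH)
    have sφh : ContDiff ℝ (⊤ : ℕ∞) (fun z => φ (Ph z, Hh z)) := hφ.comp (hPh.prodMk hHh)
    have e := slice_congr (sd (Zf_smooth γρ (ex (d := d)) (hP.sub hPh)))
      (B := fun z => (P z - Ph z) + (Mr z - Mrh z) - (φ (P z, H z) - φ (Ph z, Hh z)))
      (sd (((hP.sub hPh).add (hMr.sub hMrh)).sub (sφ.sub sφh))) t (fun y => by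
        rw [Zf_sub γρ hP hPh]
        have k1 := (hS t ht y).2.1
        have k2 := (hSh t ht y).2.1
        linarith) x i
    rw [e, Dv_sub _ _ (sd ((hP.sub hPh).add (hMr.sub hMrh))) (sd (sφ.sub sφh)),
      Dv_add _ _ (sd (hP.sub hPh)) (sd (hMr.sub hMrh)), Dv_sub _ _ (sd hP) (sd hPh),
      Dv_sub _ _ (sd hMr) (sd hMrh), Dv_sub _ _ (sd sφ) (sd sφh),
      Dv_phi hφd (sd hP) (sd hH), Dv_phi hφd (sd hPh) (sd hHh)]
    simp only [ξ, θ, zeta, Phi, dvec, mob, Sum.elim_inl]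
    ring
  have c2 : Zf γη (ex (d := d)) (fun z => H z - Hh z) p = ξ (Sum.inr ()) - θ (Sum.inr ()) := by
    rw [Zf_sub γη hH hHh]
    have k1 := (hS t ht x).2.2.2
    have k2 := (hSh t ht x).2.2.2
    simp only [ξ, θ, zeta, Phi, dvec, mob, Sum.elim_inr]
    rw [← hp] at k1 k2
    linarith
  have c3 : Dv (1, 0) (fun z => H z - Hh z) p
      = -(flux L P H Mr Me (Sum.inr ()) p - flux L Ph Hh Mrh Meh (Sum.inr ()) p) := by
    rw [Dv_sub _ _ (sd hH) (sd hHh), (hS t ht x).2.2.1, (hSh t ht x).2.2.1]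
    ring
  rw [c2, c3]
  simp only [c1]
  have c4 : ∑ i : Fin d, (θ (Sum.inl i) - ξ (Sum.inl i))
        * (flux L P H Mr Me (Sum.inl i) p - flux L Ph Hh Mrh Meh (Sum.inl i) p)
      = -∑ i : Fin d, (ξ (Sum.inl i) - θ (Sum.inl i))
        * (flux L P H Mr Me (Sum.inl i) p - flux L Ph Hh Mrh Meh (Sum.inl i) p) := by
    rw [← Finset.sum_neg_distrib]
    refine Finset.sum_congr rfl fun i _ => by ring
  rw [c4]
  change _ = _ + (θ (Sum.inr ()) - ξ (Sum.inr ())) * (flux L P H Mr Me (Sum.inr ()) p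
    - flux L Ph Hh Mrh Meh (Sum.inr ()) p)
  ring

theorem core {d : ℕ} (hd : 1 ≤ d) (T γρ γη lam0 : ℝ) (hγρ : 0 < γρ) (hγη : 0 < γη)
    (hlam0 : 0 < lam0)
    (φ ψ : ℝ × ℝ → ℝ) (hφ : ContDiff ℝ (⊤ : ℕ∞) φ) (hψ : ContDiff ℝ (⊤ : ℕ∞) ψ)
    (L : Args d → Matrix (Fin d ⊕ Unit) (Fin d ⊕ Unit) ℝ)
    (hL : ∀ i j, ContDiff ℝ (⊤ : ℕ∞) fun q : Args d => L q i j)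
    (hLlb : ∀ q : Args d, ∀ ξ : (Fin d ⊕ Unit) → ℝ,
      lam0 * ∑ i, ξ i ^ 2 ≤ qform (L q) ξ)
    (P H Mr Me Ph Hh Mrh Meh : ℝ × (Fin d → ℝ) → ℝ)
    (hP : ContDiff ℝ (⊤ : ℕ∞) P) (hH : ContDiff ℝ (⊤ : ℕ∞) H)
    (hMr : ContDiff ℝ (⊤ : ℕ∞) Mr) (hMe : ContDiff ℝ (⊤ : ℕ∞) Me)
    (hPh : ContDiff ℝ (⊤ : ℕ∞) Ph) (hHh : ContDiff ℝ (⊤ : ℕ∞) Hh)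
    (hMrh : ContDiff ℝ (⊤ : ℕ∞) Mrh) (hMeh : ContDiff ℝ (⊤ : ℕ∞) Meh)
    (pP : XPer P) (pH : XPer H) (pMr : XPer Mr) (pMe : XPer Me)
    (pPh : XPer Ph) (pHh : XPer Hh) (pMrh : XPer Mrh) (pMeh : XPer Meh)
    (hS : Sol T γρ γη φ ψ L P H Mr Me) (hSh : Sol T γρ γη φ ψ L Ph Hh Mrh Meh)
    (h01 : ∀ x, P (0, x) = Ph (0, x)) (h02 : ∀ x, H (0, x) = Hh (0, x)) :
    ∀ t ∈ Set.Icc (0:ℝ) T, ∀ x, P (t, x) = Ph (t, x) ∧ H (t, x) = Hh (t, x) := by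
  have sd := @smooth_differentiable (ℝ × (Fin d → ℝ)) ℝ _ _ _ _
  obtain ⟨C, hC, bC⟩ := remainder_bound T γρ γη lam0 hlam0 φ ψ hφ hψ L hL hLlb
    P H Mr Me Ph Hh Mrh Meh hP hH hMr hMe hPh hHh hMrh hMeh hS hSh
  set U : ℝ × (Fin d → ℝ) → ℝ := fun z => P z - Ph z with hU
  set V : ℝ × (Fin d → ℝ) → ℝ := fun z => H z - Hh z with hV
  have sU : ContDiff ℝ (⊤ : ℕ∞) U := hP.sub hPh
  have sV : ContDiff ℝ (⊤ : ℕ∞) V := hH.sub hHh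
  have pU : XPer U := fun t x k => by simp only [hU, pP t x k, pPh t x k]
  have pV : XPer V := fun t x k => by simp only [hV, pH t x k, pHh t x k]
  set F : Fin d → ℝ × (Fin d → ℝ) → ℝ := fun i z =>
    flux L P H Mr Me (Sum.inl i) z - flux L Ph Hh Mrh Meh (Sum.inl i) z with hF
  have f1 := flux_smooth hL hP hH hMr hMe
  have f2 := flux_smooth hL hPh hHh hMrh hMeh
  have sF : ∀ i, ContDiff ℝ (⊤ : ℕ∞) (F i) := fun i => (f1 (Sum.inl i)).sub (f2 (Sum.inl i))
  have pF : ∀ i, XPer (F i) := fun i t x k => by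
    simp only [hF, XPer_flux pP pH pMr pMe (Sum.inl i) t x k,
      XPer_flux pPh pHh pMrh pMeh (Sum.inl i) t x k]
  set e := edens γρ γη (ex (d := d)) U V with he
  have se : ContDiff ℝ (⊤ : ℕ∞) e := edens_smooth γρ γη _ sU sV
  have e0 : ∀ p, 0 ≤ e p := by
    intro p
    have h1 : 0 ≤ ∑ i : Fin d, Dv (ex i) U p ^ 2 := Finset.sum_nonneg fun i _ => sq_nonneg _
    have h2 : 0 ≤ ∑ i : Fin d, Dv (ex i) V p ^ 2 := Finset.sum_nonneg fun i _ => sq_nonneg _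
    simp only [he, edens]
    positivity
  set W := Wf γρ γη ((1, 0) : ℝ × (Fin d → ℝ)) (ex (d := d)) U V F with hW
  have sW : ∀ i, ContDiff ℝ (⊤ : ℕ∞) (W i) := Wf_smooth γρ γη _ _ sU sV sF
  have pW : ∀ i, XPer (W i) := by
    intro i t x k
    simp only [hW, Wf, Zf, XPer_Dv pU _ t x k, XPer_Dv pV _ t x k, pF i t x k, pU t x k,
      fun j : Fin d => XPer_Dv (XPer_Dv pU (ex j)) (ex j) t x k]
  have cslice : ∀ {g : ℝ × (Fin d → ℝ) → ℝ} (t : ℝ), Continuous g →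
      IntegrableOn (fun x => g (t, x)) (cell d) := fun t hg =>
    (hg.comp (Continuous.prodMk_right t)).continuousOn.integrableOn_compact (cell_compact d)
  have hdivint : ∀ t, ∫ x in cell d, ∑ i, Dv (ex i) (W i) (t, x) = 0 := by
    intro t
    have := div_zero_int hd (fun i y => W i (t, y))
      (fun i => (sW i).comp (contDiff_prodMk_right t)) (fun i x k => pW i t x k)
    simp only [fun i x => slice_x (sd (sW i)) t x] at this
    exact this
  set C' := C * (2 / γρ + 2 / γη + 2) with hC'
  have hE : ∀ t ∈ Set.Icc (0:ℝ) T,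
      ∫ x in cell d, e (t, x) = 0 := by
    refine gronwall_zero (C := C') (E' := fun t => ∫ x in cell d, Dv (1, 0) e (t, x)) ?_ ?_
      (energy_deriv se) ?_
    · have : ∀ x, e (0, x) = 0 := by
        intro x
        have u0 : ∀ y, U (0, y) = 0 := fun y => by simp [hU, h01 y]
        have v0 : ∀ y, V (0, y) = 0 := fun y => by simp [hV, h02 y]
        have hz : ∀ i : Fin d, Dv (ex i) (fun _ : ℝ × (Fin d → ℝ) => (0:ℝ)) (0, x) = 0 := by
          intro i; simp [Dv]
        have du : ∀ i : Fin d, Dv (ex i) U (0, x) = 0 := fun i => by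
          rw [slice_congr (sd sU) (differentiable_const (0:ℝ)) 0 u0 x i, hz]
        have dv : ∀ i : Fin d, Dv (ex i) V (0, x) = 0 := fun i => by
          rw [slice_congr (sd sV) (differentiable_const (0:ℝ)) 0 v0 x i, hz]
        simp [he, edens, u0, v0, du, dv]
      simp [this]
    · exact fun t => integral_nonneg fun x => e0 (t, x)
    · intro t ht
      have hpt : ∀ x ∈ cell d, Dv (1, 0) e (t, x)
          ≤ ∑ i, Dv (ex i) (W i) (t, x) + C' * e (t, x) := by
        intro x hx
        have hdiv : Dv (1, 0) U (t, x) = ∑ i, Dv (ex i) (F i) (t, x) := by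
          rw [hU, Dv_sub _ _ (sd hP) (sd hPh), (hS t ht x).1, (hSh t ht x).1,
            ← Finset.sum_sub_distrib]
          exact Finset.sum_congr rfl fun i _ =>
            (Dv_sub _ _ (sd (f1 (Sum.inl i))) (sd (f2 (Sum.inl i)))).symm
        have h1 := energy_identity γρ γη ((1, 0) : ℝ × (Fin d → ℝ)) (ex (d := d)) sU sV sF (t, x)
          hdiv
        have h2 := bC t ht x hx
        have h3 := mob_sq_le hγρ hγη (sd hP) (sd hH) (sd hPh) (sd hHh) (t, x)
        have h4 := mul_le_mul_of_nonneg_left h3 hC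
        rw [h1]
        have h5 : C' * e (t, x) = C * ((2 / γρ + 2 / γη + 2) * e (t, x)) := by rw [hC']; ring
        rw [h5]
        have h6 := h2.trans h4
        gcongr
      have i1 : IntegrableOn (fun x => ∑ i, Dv (ex i) (W i) (t, x)) (cell d) :=
        cslice (g := fun p => ∑ i, Dv (ex i) (W i) p) t
          (continuous_finsetSum _ fun i _ => (Dv_contDiff (ex i) (sW i)).continuous)
      have i2 : IntegrableOn (fun x => C' * e (t, x)) (cell d) :=
        cslice (g := fun p => C' * e p) t (continuous_const.mul se.continuous)
      have hmono := setIntegral_mono_on (cslice t (Dv_contDiff (1, 0) se).continuous)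
        (i1.add i2) (cell_compact d).measurableSet hpt
      refine hmono.trans (le_of_eq ?_)
      have := integral_add i1 i2
      simp only [Pi.add_apply]
      rw [this, hdivint t, integral_const_mul, zero_add]
  intro t ht
  have hz := zero_of_int (g := fun x => e (t, x))
    (se.continuous.comp (Continuous.prodMk_right t)) (fun x => e0 (t, x)) (hE t ht)
  have huv : ∀ x ∈ cell d, U (t, x) = 0 ∧ V (t, x) = 0 := by
    intro x hx
    have h := hz x hx
    have h1 : 0 ≤ γρ / 2 * ∑ i : Fin d, Dv (ex i) U (t, x) ^ 2 :=
      mul_nonneg (by positivity) (Finset.sum_nonneg fun i _ => sq_nonneg _)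
    have h2 : 0 ≤ γη / 2 * ∑ i : Fin d, Dv (ex i) V (t, x) ^ 2 :=
      mul_nonneg (by positivity) (Finset.sum_nonneg fun i _ => sq_nonneg _)
    simp only [he, edens] at h
    have h3 := sq_nonneg (U (t, x))
    have h4 := sq_nonneg (V (t, x))
    constructor
    · apply pow_eq_zero_iff (two_ne_zero) |>.1
      linarith
    · apply pow_eq_zero_iff (two_ne_zero) |>.1
      linarith
  intro x
  have hu := per_cell (g := fun x => U (t, x)) (fun x k => pU t x k) (fun x hx => (huv x hx).1) x
  have hv := per_cell (g := fun x => V (t, x)) (fun x k => pV t x k) (fun x hx => (huv x hx).2) x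
  exact ⟨sub_eq_zero.1 hu, sub_eq_zero.1 hv⟩

theorem solves_to_Sol {d : ℕ} {T γρ γη : ℝ} {f : ℝ → ℝ → ℝ}
    (hf : ContDiff ℝ (⊤ : ℕ∞) fun p : ℝ × ℝ => f p.1 p.2)
    {L : Args d → Matrix (Fin d ⊕ Unit) (Fin d ⊕ Unit) ℝ}
    (hL : ∀ i j, ContDiff ℝ (⊤ : ℕ∞) fun q : Args d => L q i j)
    {ρ η μρ μη : ℝ → (Fin d → ℝ) → ℝ} (hρ : SmoothPer d ρ) (hη : SmoothPer d η)
    (hμρ : SmoothPer d μρ) (hμη : SmoothPer d μη) (h : Solves d T γρ γη f L ρ η μρ μη) :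
    Sol T γρ γη (Dv (1, 0) fun p : ℝ × ℝ => f p.1 p.2) (Dv (0, 1) fun p : ℝ × ℝ => f p.1 p.2) L
      (fun p => ρ p.1 p.2) (fun p => η p.1 p.2) (fun p => μρ p.1 p.2) (fun p => μη p.1 p.2) := by
  have sd := @smooth_differentiable (ℝ × (Fin d → ℝ)) ℝ _ _ _ _
  have hgrad : ∀ {u : ℝ → (Fin d → ℝ) → ℝ}, SmoothPer d u → ∀ t x i,
      fderiv ℝ (u t) x (Pi.single i 1) = Dv (ex i) (fun p => u p.1 p.2) (t, x) :=
    fun hu t x i => slice_x (sd hu.1) t x (Pi.single i 1)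
  have hlap : ∀ {u : ℝ → (Fin d → ℝ) → ℝ}, SmoothPer d u → ∀ t x,
      lap (u t) x = ∑ i, Dv (ex i) (Dv (ex i) (fun p => u p.1 p.2)) (t, x) := by
    intro u hu t x
    unfold lap
    refine Finset.sum_congr rfl fun i _ => ?_
    simp only [hgrad hu]
    exact slice_x (sd (Dv_contDiff (ex i) hu.1)) t x (Pi.single i 1)
  have hmob : ∀ t x, mobArgs (ρ t) (η t) x
      = mob (fun p => ρ p.1 p.2) (fun p => η p.1 p.2) (t, x) := by
    intro t x
    simp only [mobArgs, mob, Prod.mk.injEq]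
    exact ⟨trivial, funext fun i => hgrad hρ t x i, trivial, funext fun i => hgrad hη t x i⟩
  have hfd : Differentiable ℝ fun p : ℝ × ℝ => f p.1 p.2 := smooth_differentiable hf
  have hpr : ∀ r e, pdRho f r e = Dv (1, 0) (fun p : ℝ × ℝ => f p.1 p.2) (r, e) := by
    intro r e
    have h1 : HasFDerivAt (fun s => f s e) ((fderiv ℝ (fun p : ℝ × ℝ => f p.1 p.2) (r, e)).comp
        (ContinuousLinearMap.inl ℝ ℝ ℝ)) r :=
      HasFDerivAt.comp (f := fun s => (s, e)) r (hfd (r, e)).hasFDerivAt (hasFDerivAt_prodMk_left r e)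
    have h2 := h1.hasDerivAt.deriv
    simpa [Dv, pdRho] using h2
  have hpe : ∀ r e, pdEta f r e = Dv (0, 1) (fun p : ℝ × ℝ => f p.1 p.2) (r, e) := by
    intro r e
    have h1 : HasFDerivAt (fun s => f r s) ((fderiv ℝ (fun p : ℝ × ℝ => f p.1 p.2) (r, e)).comp
        (ContinuousLinearMap.inr ℝ ℝ ℝ)) e :=
      HasFDerivAt.comp (f := fun s => (r, s)) e (hfd (r, e)).hasFDerivAt (hasFDerivAt_prodMk_right r e)
    have h2 := h1.hasDerivAt.deriv
    simpa [Dv, pdEta] using h2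
  have hfl : ∀ t y k, (∑ j, L (mobArgs (ρ t) (η t) y) k (Sum.inl j) * grad (μρ t) y j)
        + L (mobArgs (ρ t) (η t) y) k (Sum.inr ()) * μη t y
      = flux L (fun p => ρ p.1 p.2) (fun p => η p.1 p.2) (fun p => μρ p.1 p.2)
        (fun p => μη p.1 p.2) k (t, y) := by
    intro t y k
    simp only [flux, Fintype.sum_sum_type, zeta, dvec, Sum.elim_inl, Sum.elim_inr, grad, hmob,
      hgrad hμρ, Finset.univ_unique, Finset.sum_singleton]
  intro t ht x
  obtain ⟨h1, h2, h3, h4⟩ := h t ht x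
  simp only [hfl] at h1 h3
  rw [hlap hρ, hpr] at h2
  rw [hlap hη, hpe] at h4
  refine ⟨?_, h2, ?_, h4⟩
  · rw [← slice_t (sd hρ.1)]
    refine h1.trans ?_
    unfold divg
    exact Finset.sum_congr rfl fun i _ =>
      slice_x (sd (flux_smooth hL hρ.1 hη.1 hμρ.1 hμη.1 (Sum.inl i))) t x (Pi.single i 1)
  · rw [← slice_t (sd hη.1)]
    exact h3

end Core

/-- Theorem 3.4, uniqueness / weak-strong uniqueness principle,
for classical solutions: under (A1)–(A4), two smooth periodic solutions of
the coupled Cahn–Hilliard/Allen–Cahn system with the same initial data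
coincide on `[0,T] × ℝ^d`, together with their chemical potentials. -/
theorem stmt16 (d : ℕ) (hd : 1 ≤ d) (T : ℝ) (hT : 0 ≤ T)
    -- (A1)
    (γρ γη : ℝ) (hγρ : 0 < γρ) (hγη : 0 < γη)
    -- (A2)
    (lam0 lam1 CL : ℝ) (hlam0 : 0 < lam0) (hlam01 : lam0 ≤ lam1) (hCL : 0 < CL)
    (L : Args d → Matrix (Fin d ⊕ Unit) (Fin d ⊕ Unit) ℝ)
    (hLsmooth : ∀ i j, ContDiff ℝ (⊤ : ℕ∞) fun q : Args d => L q i j)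
    (hLlb : ∀ q : Args d, ∀ ξ : (Fin d ⊕ Unit) → ℝ,
      lam0 * ∑ i, ξ i ^ 2 ≤ qform (L q) ξ)
    (hLub : ∀ q : Args d, ∀ ξ : (Fin d ⊕ Unit) → ℝ,
      qform (L q) ξ ≤ lam1 * ∑ i, ξ i ^ 2)
    (hLderiv : ∀ (q : Args d) i j, ‖fderiv ℝ (fun p => L p i j) q‖ ≤ CL)
    -- (A3)
    (f : ℝ → ℝ → ℝ) (hf : ContDiff ℝ (⊤ : ℕ∞) fun p : ℝ × ℝ => f p.1 p.2)
    (hf0 : ∀ r e, 0 ≤ f r e)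
    (hfpoly0 : ∃ Cp : ℝ, ∀ r e, |f r e| ≤ Cp * (1 + |r| + |e|) ^ 4)
    (hfpoly : ∀ k l : ℕ, k + l ≤ 3 → ∃ Cp : ℝ, ∀ r e,
      |pdiff k l f r e| ≤ Cp * (1 + |r| + |e|) ^ (4 - (k + l)))
    -- (A4)
    (α : ℝ) (hα : 0 < α)
    (hconv : ConvexOn ℝ Set.univ
      (fun p : ℝ × ℝ => f p.1 p.2 + α / 4 * (p.1 ^ 2 + p.2 ^ 2)))
    -- the two solutions
    (ρ η μρ μη ρh ηh μρh μηh : ℝ → (Fin d → ℝ) → ℝ)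
    (hρ : SmoothPer d ρ) (hη : SmoothPer d η)
    (hμρ : SmoothPer d μρ) (hμη : SmoothPer d μη)
    (hρh : SmoothPer d ρh) (hηh : SmoothPer d ηh)
    (hμρh : SmoothPer d μρh) (hμηh : SmoothPer d μηh)
    (hsol : Solves d T γρ γη f L ρ η μρ μη)
    (hsolh : Solves d T γρ γη f L ρh ηh μρh μηh)
    -- same initial data
    (hinit1 : ∀ x, ρ 0 x = ρh 0 x) (hinit2 : ∀ x, η 0 x = ηh 0 x) :
    ∀ t ∈ Set.Icc (0:ℝ) T, ∀ x,
      ρ t x = ρh t x ∧ η t x = ηh t x ∧ μρ t x = μρh t x ∧ μη t x = μηh t x := by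

  have hcore := core hd T γρ γη lam0 hγρ hγη hlam0 _ _ (Dv_contDiff (1, 0) hf)
    (Dv_contDiff (0, 1) hf) L hLsmooth hLlb _ _ _ _ _ _ _ _ hρ.1 hη.1 hμρ.1 hμη.1
    hρh.1 hηh.1 hμρh.1 hμηh.1 (fun t => hρ.2 t) (fun t => hη.2 t) (fun t => hμρ.2 t)
    (fun t => hμη.2 t) (fun t => hρh.2 t) (fun t => hηh.2 t) (fun t => hμρh.2 t)
    (fun t => hμηh.2 t) (solves_to_Sol hf hLsmooth hρ hη hμρ hμη hsol)
    (solves_to_Sol hf hLsmooth hρh hηh hμρh hμηh hsolh) hinit1 hinit2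
  intro t ht x
  have e1 : ρ t = ρh t := funext fun y => (hcore t ht y).1
  have e2 : η t = ηh t := funext fun y => (hcore t ht y).2
  obtain ⟨_, a1, _, a2⟩ := hsol t ht x
  obtain ⟨_, b1, _, b2⟩ := hsolh t ht x
  refine ⟨by rw [e1], by rw [e2], ?_, ?_⟩
  · rw [a1, b1, e1, e2]
  · rw [a2, b2, e1, e2]
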